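/- Let d be a positive integer, M ∈ ℂ^{d×d} a positive semi-definite Hermitian matrix of rank r ≤ d with eigenvalues λ₁ ≥ … ≥ λ_d, c ∈ ℝ, and a ∈ ℂ^d. Let A be the (d+1)×(d+1) Hermitian bordered matrix A = [[c, a*], [a, M]]. Then λ_{r+1}(A) ≥ min(c, λ_r) − ‖a‖₂. -/

import Mathlib

open scoped ComplexOrder

/-!
The proof is the Courant–Fischer dimension count, done by hand. Let `u i` and `v j` be eigenvectors
of `M` and `A` for `μ i` and `ν j`. Asking of `z = (x, y) ∈ ℂ × ℂ^d` that `y` be orthogonal to the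
`d - r` vectors `u i` with `i ≥ r`, and that `z` be orthogonal to the `r` vectors `v j` with `j < r`,
is a system of `d` linear equations in `d + 1` unknowns, so some `z ≠ 0` satisfies it. For this `z`,
the expansion of Rayleigh quotients in an eigenbasis (`re_inner_toEuclideanLin_eq_sum`) gives
`⟪z, A z⟫ ≤ ν r * ‖z‖²` and `⟪y, M y⟫ ≥ μ (r - 1) * ‖y‖²`. On the other hand
`⟪z, A z⟫ = c * ‖x‖² + 2 * Re (conj x * ⟪a, y⟫) + ⟪y, M y⟫` (`re_inner_bordered`), where the cross
term is at least `-2 * ‖x‖ * ‖a‖ * ‖y‖ ≥ -‖a‖ * ‖z‖²`.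
-/

lemma re_inner_toEuclideanLin_eq_sum {n : Type*} [Fintype n] [DecidableEq n]
    {H : Matrix n n ℂ} (hH : H.IsHermitian) (z : EuclideanSpace ℂ n) :
    (inner ℂ z (Matrix.toEuclideanLin H z)).re
      = ∑ i, hH.eigenvalues i * ‖inner ℂ (hH.eigenvectorBasis i) z‖ ^ 2 := by
  have hsym := Matrix.isSymmetric_toEuclideanLin_iff.2 hH
  rw [← hH.eigenvectorBasis.sum_inner_mul_inner, Complex.re_sum]
  refine Finset.sum_congr rfl fun i _ => ?_
  have hv : Matrix.toEuclideanLin H (hH.eigenvectorBasis i)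
      = (hH.eigenvalues i : ℂ) • hH.eigenvectorBasis i := by
    ext j
    have := congrFun (hH.mulVec_eigenvectorBasis i) j
    simpa [Matrix.toLpLin_apply] using this
  rw [← hsym (hH.eigenvectorBasis i) z, hv, inner_smul_left, ← inner_conj_symm z,
    Complex.conj_ofReal, mul_left_comm, ← Complex.normSq_eq_conj_mul_self,
    Complex.normSq_eq_norm_sq]
  norm_cast

lemma norm_sq_eq_sum_eigenvectorBasis {n : Type*} [Fintype n] [DecidableEq n]
    {H : Matrix n n ℂ} (hH : H.IsHermitian) (z : EuclideanSpace ℂ n) :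
    ‖z‖ ^ 2 = ∑ i, ‖inner ℂ (hH.eigenvectorBasis i) z‖ ^ 2 :=
  (hH.eigenvectorBasis.sum_sq_norm_inner_right z).symm

/-- The projection of `ℂ × ℂ^d` onto its second factor. -/
noncomputable def lowerPart (d : ℕ) :
    EuclideanSpace ℂ (Unit ⊕ Fin d) →ₗ[ℂ] EuclideanSpace ℂ (Fin d) where
  toFun z := WithLp.toLp 2 fun i => z (Sum.inr i)
  map_add' _ _ := rfl
  map_smul' _ _ := rfl

lemma lowerPart_apply {d : ℕ} (z : EuclideanSpace ℂ (Unit ⊕ Fin d)) (i : Fin d) :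
    lowerPart d z i = z (Sum.inr i) := rfl

lemma norm_sq_eq_corner_add_lowerPart {d : ℕ} (z : EuclideanSpace ℂ (Unit ⊕ Fin d)) :
    ‖z‖ ^ 2 = ‖z (Sum.inl ())‖ ^ 2 + ‖lowerPart d z‖ ^ 2 := by
  simp [EuclideanSpace.norm_sq_eq, lowerPart_apply]

lemma re_inner_bordered {d : ℕ} (M : Matrix (Fin d) (Fin d) ℂ) (c : ℝ)
    (a : EuclideanSpace ℂ (Fin d)) (z : EuclideanSpace ℂ (Unit ⊕ Fin d)) :
    (inner ℂ z (Matrix.toEuclideanLin (Matrix.fromBlocks (Matrix.of fun _ _ => (c : ℂ))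
        (Matrix.of fun _ j => star (a j)) (Matrix.of fun i _ => a i) M) z)).re
      = c * ‖z (Sum.inl ())‖ ^ 2
        + 2 * (starRingEnd ℂ (z (Sum.inl ())) * inner ℂ a (lowerPart d z)).re
        + (inner ℂ (lowerPart d z) (Matrix.toEuclideanLin M (lowerPart d z))).re := by
  have key : inner ℂ z (Matrix.toEuclideanLin (Matrix.fromBlocks (Matrix.of fun _ _ => (c : ℂ))
        (Matrix.of fun _ j => star (a j)) (Matrix.of fun i _ => a i) M) z)
      = c * (starRingEnd ℂ (z (Sum.inl ())) * z (Sum.inl ()))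
        + starRingEnd ℂ (z (Sum.inl ())) * inner ℂ a (lowerPart d z)
        + starRingEnd ℂ (starRingEnd ℂ (z (Sum.inl ())) * inner ℂ a (lowerPart d z))
        + inner ℂ (lowerPart d z) (Matrix.toEuclideanLin M (lowerPart d z)) := by
    simp only [PiLp.inner_apply, Matrix.toLpLin_apply, Matrix.mulVec, dotProduct, lowerPart_apply,
      Fintype.sum_sum_type, Matrix.fromBlocks_apply₁₁, Matrix.fromBlocks_apply₁₂,
      Matrix.fromBlocks_apply₂₁, Matrix.fromBlocks_apply₂₂, Matrix.of_apply, RCLike.inner_apply,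
      Finset.univ_unique, Finset.sum_singleton, map_mul, map_sum,
      Complex.conj_conj, add_mul, Finset.sum_add_distrib, RCLike.star_def, Finset.mul_sum,
      Finset.sum_mul, PUnit.default_eq_unit]
    simp only [mul_comm, mul_left_comm]
    ring_nf
  rw [key, ← Complex.normSq_eq_conj_mul_self, Complex.normSq_eq_norm_sq]
  simp only [Complex.add_re, Complex.conj_re, ← Complex.ofReal_mul, Complex.ofReal_re]
  ring

/-- **Weyl-type lower bound on the smallest nonzero eigenvalue after bordering.**
`M ∈ ℂ^{d×d}` is PSD Hermitian of rank `r ≤ d`, with antitone eigenvalue enumeration `μ`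
(so `μ (r-1) = λ_r`), and `ν` antitone enumeration of eigenvalues of `A = [[c, a*], [a, M]]`
(so `ν r = λ_{r+1}(A)`). Then `λ_{r+1}(A) ≥ min (c, λ_r) − ‖a‖₂`. -/
theorem bordered_smallest_nonzero_eigenvalue_lower_weyl
    (d : ℕ) (hd : 0 < d)
    (M : Matrix (Fin d) (Fin d) ℂ) (hM : M.IsHermitian) (hpsd : M.PosSemidef)
    (r : ℕ) (hr1 : 1 ≤ r) (hrd : r ≤ d) (hrank : M.rank = r)
    (c : ℝ) (a : EuclideanSpace ℂ (Fin d))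
    (μ : Fin d → ℝ) (hμa : Antitone μ)
    (hμ : ∃ e : Equiv.Perm (Fin d), ∀ i, μ i = hM.eigenvalues (e i))
    (A : Matrix (Unit ⊕ Fin d) (Unit ⊕ Fin d) ℂ)
    (hA : A = Matrix.fromBlocks (Matrix.of fun _ _ => (c : ℂ))
        (Matrix.of fun _ j => star (a j)) (Matrix.of fun i _ => a i) M)
    (hAh : A.IsHermitian)
    (ν : Fin (d + 1) → ℝ) (hνa : Antitone ν)
    (hν : ∃ e : Fin (d + 1) ≃ (Unit ⊕ Fin d), ∀ i, ν i = hAh.eigenvalues (e i)) :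
    ν ⟨r, by omega⟩ ≥ min c (μ ⟨r - 1, by omega⟩) - ‖a‖ := by
  obtain ⟨e, he⟩ := hμ
  obtain ⟨f, hf⟩ := hν
  -- The `d` linear equations: the index `i < r` imposes `z ⊥ v i`, the index `i ≥ r` imposes
  -- `y ⊥ u i`.
  let L : EuclideanSpace ℂ (Unit ⊕ Fin d) →ₗ[ℂ] (Fin d → ℂ) := LinearMap.pi fun i =>
    if (i : ℕ) < r then (innerSL ℂ (hAh.eigenvectorBasis (f i.castSucc))).toLinearMap
    else (innerSL ℂ (hM.eigenvectorBasis (e i))).toLinearMap ∘ₗ lowerPart d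
  have hker : LinearMap.ker L ≠ ⊥ := LinearMap.ker_ne_bot_of_finrank_lt (by simp)
  obtain ⟨z, hz, hz0⟩ := Submodule.exists_mem_ne_zero_of_ne_bot hker
  have hLz : ∀ i, L z i = 0 := fun i => congrFun (LinearMap.mem_ker.1 hz) i
  have hv : ∀ i : Fin (d + 1), (i : ℕ) < r → inner ℂ (hAh.eigenvectorBasis (f i)) z = 0 := by
    intro i hi
    have := hLz ⟨i, by omega⟩
    simpa [L, hi] using this
  have hu : ∀ i : Fin d, r ≤ (i : ℕ) →
      inner ℂ (hM.eigenvectorBasis (e i)) (lowerPart d z) = 0 := by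
    intro i hi
    have := hLz i
    simpa [L, not_lt.2 hi] using this
  set m := μ ⟨r - 1, by omega⟩
  set n := ν ⟨r, by omega⟩
  have hupper : (inner ℂ z (Matrix.toEuclideanLin A z)).re ≤ n * ‖z‖ ^ 2 := by
    rw [re_inner_toEuclideanLin_eq_sum hAh, norm_sq_eq_sum_eigenvectorBasis hAh z, Finset.mul_sum]
    refine Finset.sum_le_sum fun k _ => ?_
    obtain ⟨i, rfl⟩ := f.surjective k
    rw [← hf]
    rcases lt_or_ge (i : ℕ) r with hi | hi
    · simp [hv i hi]
    · exact mul_le_mul_of_nonneg_right (hνa (Fin.mk_le_of_le_val hi)) (by positivity)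
  have hlower : m * ‖lowerPart d z‖ ^ 2
      ≤ (inner ℂ (lowerPart d z) (Matrix.toEuclideanLin M (lowerPart d z))).re := by
    rw [re_inner_toEuclideanLin_eq_sum hM, norm_sq_eq_sum_eigenvectorBasis hM, Finset.mul_sum]
    refine Finset.sum_le_sum fun k _ => ?_
    obtain ⟨i, rfl⟩ := e.surjective k
    rw [← he]
    rcases lt_or_ge (i : ℕ) r with hi | hi
    · refine mul_le_mul_of_nonneg_right (hμa ?_) (by positivity)
      rw [Fin.le_def]
      exact Nat.le_sub_one_of_lt hi
    · simp [hu i hi]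
  rw [hA, re_inner_bordered] at hupper
  have hsplit := norm_sq_eq_corner_add_lowerPart z
  have hzpos : 0 < ‖z‖ ^ 2 := by positivity
  set x := z (Sum.inl ())
  set y := lowerPart d z
  have hcross : -(‖x‖ * (‖a‖ * ‖y‖)) ≤ (starRingEnd ℂ x * inner ℂ a y).re := by
    have h1 := (abs_le.1 (Complex.abs_re_le_norm (starRingEnd ℂ x * inner ℂ a y))).1
    have h2 : ‖starRingEnd ℂ x * inner ℂ a y‖ ≤ ‖x‖ * (‖a‖ * ‖y‖) := by
      rw [norm_mul, RCLike.norm_conj]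
      exact mul_le_mul_of_nonneg_left (norm_inner_le_norm a y) (norm_nonneg _)
    linarith
  have hc : min c m * ‖x‖ ^ 2 ≤ c * ‖x‖ ^ 2 :=
    mul_le_mul_of_nonneg_right (min_le_left _ _) (by positivity)
  have hm : min c m * ‖y‖ ^ 2 ≤ m * ‖y‖ ^ 2 :=
    mul_le_mul_of_nonneg_right (min_le_right _ _) (by positivity)
  have ham : 0 ≤ ‖a‖ * (‖x‖ - ‖y‖) ^ 2 := by positivity
  refine le_of_mul_le_mul_right ?_ hzpos
  rw [hsplit] at hupper ⊢
  nlinarith
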